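/- Fix ψ₂, γ₁, γ* > 0. (a) The optimization problem T_∞(κ̄) = min{ R(κ̄, d₁, d₂) : d₁² + d₂² ≤ 1, d₂ ≥ 0 } has, for each κ̄ > 0, a unique minimizer (d₁*(κ̄), d₂*(κ̄)), which lies in the open set {(d₁,d₂) : d₁² + d₂² < 1, d₂ > 0} and is uniquely characterized by the first-order stationarity condition ∇_{(d₁,d₂)} R(κ̄, d₁*, d₂*) = 0. (b) The function κ̄ ↦ T_∞(κ̄) is strictly increasing on (0,∞) and satisfies lim_{κ̄↓0} T_∞(κ̄) < 0 < lim_{κ̄↑∞} T_∞(κ̄); hence T_∞ has a unique zero κ̄^wide(ψ₂, γ₁, γ*) on (0,∞). -/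

import Mathlib

open MeasureTheory ProbabilityTheory Real Filter Set Topology

noncomputable section

namespace MaxMargin

/-- The standard Gaussian measure on `ℝ`. -/
def stdG : Measure ℝ := gaussianReal 0 1

/-- The function `F_κ(c₁,c₂) = (E[((κ − c₁·Y·G − c₂·Z)₊)²])^{1/2}` where `G, Z` are independent
standard Gaussians and, conditionally on `G`, `Y ∈ {+1,−1}` with `P(Y = +1 | G) = f(G)`. -/
def Fk (f : ℝ → ℝ) (κ c₁ c₂ : ℝ) : ℝ :=
  Real.sqrt (∫ g, ∫ z,
    (f g * (max (κ - c₁ * g - c₂ * z) 0) ^ 2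
      + (1 - f g) * (max (κ + c₁ * g - c₂ * z) 0) ^ 2) ∂stdG ∂stdG)

/-- Non-degeneracy of `f`: the variable `T = Y·G` satisfies `P(T < x) > 0` and `P(T > x) > 0`
for every `x ∈ ℝ`. -/
def NonDeg (f : ℝ → ℝ) : Prop :=
  ∀ x : ℝ,
    (0 < ∫ g, (f g * (if g < x then (1:ℝ) else 0)
          + (1 - f g) * (if -g < x then (1:ℝ) else 0)) ∂stdG) ∧
    (0 < ∫ g, (f g * (if x < g then (1:ℝ) else 0)
          + (1 - f g) * (if x < -g then (1:ℝ) else 0)) ∂stdG)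


/-- `R(κ̄, d₁, d₂) = F_{κ̄}(√ψ₂·γ₁·d₁, √ψ₂·γ₁·d₂) − γ₁·d₂ − γ*·√(1 − d₁² − d₂²)`. -/
def Rwide (f₀ : ℝ → ℝ) (ψ₂ γ₁ γs κ : ℝ) (d : ℝ × ℝ) : ℝ :=
  Fk f₀ κ (Real.sqrt ψ₂ * γ₁ * d.1) (Real.sqrt ψ₂ * γ₁ * d.2)
    - γ₁ * d.2 - γs * Real.sqrt (1 - d.1 ^ 2 - d.2 ^ 2)

/-- The constraint set `{(d₁,d₂) : d₁² + d₂² ≤ 1, d₂ ≥ 0}`. -/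
def Kwide : Set (ℝ × ℝ) := {d : ℝ × ℝ | d.1 ^ 2 + d.2 ^ 2 ≤ 1 ∧ 0 ≤ d.2}

/-- `T_∞(κ̄) = min{R(κ̄,d₁,d₂) : (d₁,d₂) ∈ K}`. -/
def Twide (f₀ : ℝ → ℝ) (ψ₂ γ₁ γs κ : ℝ) : ℝ :=
  sInf (Rwide f₀ ψ₂ γ₁ γs κ '' Kwide)

instance stdG_prob : IsProbabilityMeasure stdG := by unfold stdG; infer_instance

lemma stdG_map_neg : Measure.map (fun x : ℝ => -x) stdG = stdG := by
  unfold stdG; rw [gaussianReal_map_neg]; simp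

lemma stdG_memLp : MemLp (fun z : ℝ => z) 2 stdG := by
  have := memLp_id_gaussianReal (μ := 0) (v := 1) 2
  exact_mod_cast this

lemma stdG_mean : ∫ z, z ∂stdG = 0 := by
  unfold stdG; exact integral_id_gaussianReal

lemma stdG_sq : ∫ z, z ^ 2 ∂stdG = 1 := by
  have h := variance_id_gaussianReal (μ := 0) (v := 1)
  rw [variance_of_integral_eq_zero (by fun_prop) (by simp)] at h
  simpa [stdG] using h

/-- The law of `T = Y G`. -/
def lawT (f : ℝ → ℝ) : Measure ℝ :=
  stdG.withDensity (fun g => ENNReal.ofReal (f g))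
    + Measure.map (fun x : ℝ => -x) (stdG.withDensity (fun g => ENNReal.ofReal (1 - f g)))

lemma wd_le (f : ℝ → ℝ) (h : ∀ x, f x ≤ 1) :
    stdG.withDensity (fun g => ENNReal.ofReal (f g)) ≤ stdG := by
  calc stdG.withDensity (fun g => ENNReal.ofReal (f g)) ≤ stdG.withDensity 1 := by
        apply withDensity_mono
        filter_upwards with x
        simp [h x]
    _ = stdG := withDensity_one

lemma lawT_le (f : ℝ → ℝ) (hf01 : ∀ x, f x ∈ Set.Icc (0:ℝ) 1) :
    lawT f ≤ stdG + stdG := by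
  unfold lawT
  apply add_le_add (wd_le f fun x => (hf01 x).2)
  calc _ ≤ Measure.map (fun x : ℝ => -x) stdG :=
        Measure.map_mono (wd_le (fun x => 1 - f x) (fun x => by linarith [(hf01 x).1])) (by fun_prop)
    _ = stdG := stdG_map_neg

lemma lawT_memLp (f : ℝ → ℝ) (hf01 : ∀ x, f x ∈ Set.Icc (0:ℝ) 1) :
    MemLp (fun z : ℝ => z) 2 (lawT f) := by
  refine MemLp.mono_measure (lawT_le f hf01) ?_
  rw [← two_smul ENNReal stdG]
  exact stdG_memLp.smul_measure (by simp)

lemma wd_integral (f : ℝ → ℝ) (hf : Continuous f) (h0 : ∀ x, 0 ≤ f x) (φ : ℝ → ℝ) :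
    ∫ x, φ x ∂(stdG.withDensity (fun g => ENNReal.ofReal (f g))) = ∫ x, f x * φ x ∂stdG := by
  rw [integral_withDensity_eq_integral_toReal_smul (by fun_prop) (by simp)]
  refine integral_congr_ae ?_
  filter_upwards with x
  simp [ENNReal.toReal_ofReal (h0 x)]

lemma lawT_integral (f : ℝ → ℝ) (hf : Continuous f) (hf01 : ∀ x, f x ∈ Set.Icc (0:ℝ) 1)
    (φ : ℝ → ℝ) (hm : Measurable φ) (hi : Integrable φ stdG) :
    ∫ x, φ x ∂(lawT f) = ∫ g, (f g * φ g + (1 - f g) * φ (-g)) ∂stdG := by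
  have hb : ∀ ψ : ℝ → ℝ, Integrable ψ stdG → ∀ h : ℝ → ℝ, Continuous h →
      (∀ x, h x ∈ Set.Icc (0:ℝ) 1) → Integrable (fun g => h g * ψ g) stdG := by
    intro ψ hψ h hc hh
    refine hψ.bdd_mul (c := 1) hc.aestronglyMeasurable ?_
    filter_upwards with x
    rw [Real.norm_eq_abs, abs_of_nonneg (hh x).1]
    exact (hh x).2
  have hneg : Integrable (fun g => φ (-g)) stdG := by
    have : Integrable φ (Measure.map (fun x : ℝ => -x) stdG) := by rwa [stdG_map_neg]
    exact this.comp_measurable (by fun_prop)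
  have h1 : ∀ x, (fun g => 1 - f g) x ∈ Set.Icc (0:ℝ) 1 := fun x => by
    have := hf01 x
    constructor <;> simp [this.1, this.2]
  rw [integral_add (hb φ hi f hf hf01) (hb _ hneg (fun g => 1 - f g) (by fun_prop) h1)]
  unfold lawT
  rw [integral_add_measure, wd_integral f hf (fun x => (hf01 x).1),
    integral_map (by fun_prop) hm.aestronglyMeasurable,
    wd_integral (fun g => 1 - f g) (by fun_prop) (fun x => (h1 x).1)]
  · exact hi.mono_measure (wd_le f fun x => (hf01 x).2)
  · refine hi.mono_measure (?_ : _ ≤ stdG)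
    calc _ ≤ Measure.map (fun x : ℝ => -x) stdG :=
        Measure.map_mono (wd_le (fun x => 1 - f x) (fun x => (h1 x).2)) (by fun_prop)
      _ = stdG := stdG_map_neg

lemma lawT_prob (f : ℝ → ℝ) (hf : Continuous f) (hf01 : ∀ x, f x ∈ Set.Icc (0:ℝ) 1) :
    IsProbabilityMeasure (lawT f) := by
  have hfin : IsFiniteMeasure (lawT f) := by
    exact isFiniteMeasure_of_le (stdG + stdG) (lawT_le f hf01)
  have := lawT_integral f hf hf01 (fun _ => 1) (by fun_prop) (by simp)
  simp [Measure.real] at this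
  constructor
  rwa [ENNReal.toReal_eq_one_iff] at this

/-- Squared objective. -/
def Hq (ν : Measure ℝ) (κ : ℝ) (c : ℝ × ℝ) : ℝ :=
  ∫ p, (max (κ - c.1 * p.1 - c.2 * p.2) 0) ^ 2 ∂(ν.prod stdG)

lemma X_memLp (ν : Measure ℝ) [IsProbabilityMeasure ν] (hν : MemLp (fun z : ℝ => z) 2 ν)
    (κ a b : ℝ) : MemLp (fun p : ℝ × ℝ => κ - a * p.1 - b * p.2) 2 (ν.prod stdG) := by
  refine MemLp.sub (MemLp.sub (memLp_const κ) ?_) ?_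
  · exact (hν.comp_fst stdG).const_mul a
  · exact (stdG_memLp.comp_snd ν).const_mul b

lemma Fk_eq (f : ℝ → ℝ) (hf : Continuous f) (hf01 : ∀ x, f x ∈ Set.Icc (0:ℝ) 1) (κ a b : ℝ) :
    Fk f κ a b = Real.sqrt (Hq (lawT f) κ (a, b)) := by
  have := lawT_prob f hf hf01
  unfold Fk Hq
  congr 1
  have hi : ∀ ν : Measure ℝ, IsProbabilityMeasure ν → MemLp (fun z : ℝ => z) 2 ν →
      Integrable (fun p : ℝ × ℝ => (max (κ - a * p.1 - b * p.2) 0) ^ 2) (ν.prod stdG) :=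
    fun ν _ hν => (X_memLp ν hν κ a b).pos_part.integrable_sq
  have hz : ∀ t : ℝ, Integrable (fun z => (max (κ - t - b * z) 0) ^ 2) stdG := by
    intro t
    refine MemLp.integrable_sq (MemLp.pos_part (f := fun z => κ - t - b * z) ?_)
    exact MemLp.sub (memLp_const _) (stdG_memLp.const_mul b)
  have e := integral_prod _ (hi (lawT f) this (lawT_memLp f hf01))
  dsimp only at e ⊢
  rw [e, lawT_integral f hf hf01]
  · refine integral_congr_ae ?_
    filter_upwards with g
    have h2 : Integrable (fun z => (max (κ + a * g - b * z) 0) ^ 2) stdG := by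
      simpa using hz (-(a * g))
    rw [integral_add ((hz _).const_mul _) (h2.const_mul _), integral_const_mul,
      integral_const_mul]
    simp
  · exact (StronglyMeasurable.integral_prod_right (f := fun x y => (max (κ - a * x - b * y) 0) ^ 2)
      (Continuous.stronglyMeasurable (by fun_prop))).measurable
  · exact (hi stdG inferInstance stdG_memLp).integral_prod_left

lemma ind_neg (f : ℝ → ℝ) (hf : Continuous f) (hf01 : ∀ x, f x ∈ Set.Icc (0:ℝ) 1)
    (h : NonDeg f) : 0 < ∫ t, (if t < 0 then (1:ℝ) else 0) ∂(lawT f) := by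
  have hm : Measurable (fun t : ℝ => if t < 0 then (1:ℝ) else 0) :=
    Measurable.ite measurableSet_Iio measurable_const measurable_const
  rw [lawT_integral f hf hf01 _ hm]
  · exact (h 0).1
  · refine Integrable.of_bound hm.aestronglyMeasurable 1 ?_
    filter_upwards with x
    split_ifs <;> simp

lemma ind_pos (f : ℝ → ℝ) (hf : Continuous f) (hf01 : ∀ x, f x ∈ Set.Icc (0:ℝ) 1)
    (h : NonDeg f) : 0 < ∫ t, (if 0 < t then (1:ℝ) else 0) ∂(lawT f) := by
  have hm : Measurable (fun t : ℝ => if 0 < t then (1:ℝ) else 0) :=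
    Measurable.ite measurableSet_Ioi measurable_const measurable_const
  rw [lawT_integral f hf hf01 _ hm]
  · exact (h 0).2
  · refine Integrable.of_bound hm.aestronglyMeasurable 1 ?_
    filter_upwards with x
    split_ifs <;> simp

lemma int_fsub {α : Type*} [MeasurableSpace α] {μ : Measure α} {f g : α → ℝ}
    (hf : Integrable f μ) (hg : Integrable g μ) : Integrable (fun x => f x - g x) μ := hf.sub hg


lemma ps_lower (a b : ℝ) : (max a 0) ^ 2 - 2 * max a 0 * b ≤ (max (a - b) 0) ^ 2 := by
  rcases le_total a 0 with h | h <;> rcases le_total (a - b) 0 with h' | h' <;>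
    simp only [max_eq_left, max_eq_right, h, h'] <;> nlinarith [sq_nonneg (a - b), sq_nonneg b]

lemma ps_upper (a b : ℝ) : (max (a - b) 0) ^ 2 ≤ (max a 0) ^ 2 - 2 * max a 0 * b + b ^ 2 := by
  rcases le_total a 0 with h | h <;> rcases le_total (a - b) 0 with h' | h' <;>
    simp only [max_eq_left, max_eq_right, h, h'] <;> nlinarith [sq_nonneg (a - b), sq_nonneg b]

lemma cs_int {α : Type*} [MeasurableSpace α] (μ : Measure α) (A B : α → ℝ)
    (hA : MemLp A 2 μ) (hB : MemLp B 2 μ) (h0A : ∀ x, 0 ≤ A x) (h0B : ∀ x, 0 ≤ B x) :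
    ∫ x, A x * B x ∂μ ≤ √(∫ x, A x ^ 2 ∂μ) * √(∫ x, B x ^ 2 ∂μ) := by
  have := integral_mul_le_Lp_mul_Lq_of_nonneg (μ := μ) (p := 2) (q := 2)
    Real.HolderConjugate.two_two (f := A) (g := B)
    (by filter_upwards with x using h0A x) (by filter_upwards with x using h0B x)
    (by simpa using hA) (by simpa using hB)
  simpa [Real.sqrt_eq_rpow] using this

lemma minkowski {α : Type*} [MeasurableSpace α] (μ : Measure α) (A B : α → ℝ)
    (hA : MemLp A 2 μ) (hB : MemLp B 2 μ) (h0A : ∀ x, 0 ≤ A x) (h0B : ∀ x, 0 ≤ B x) :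
    √(∫ x, (A x + B x) ^ 2 ∂μ) ≤ √(∫ x, A x ^ 2 ∂μ) + √(∫ x, B x ^ 2 ∂μ) := by
  have hcs := cs_int μ A B hA hB h0A h0B
  have e : ∫ x, (A x + B x) ^ 2 ∂μ
      = ∫ x, A x ^ 2 ∂μ + 2 * ∫ x, A x * B x ∂μ + ∫ x, B x ^ 2 ∂μ := by
    rw [← integral_const_mul, ← integral_add, ← integral_add]
    · congr 1; ext x; ring
    · exact hA.integrable_sq.add ((hA.integrable_mul hB).const_mul 2)
    · exact hB.integrable_sq
    · exact hA.integrable_sq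
    · exact (hA.integrable_mul hB).const_mul 2
  apply Real.sqrt_le_iff.2
  refine ⟨by positivity, ?_⟩
  rw [e]
  have h1 : √(∫ x, A x ^ 2 ∂μ) ^ 2 = ∫ x, A x ^ 2 ∂μ :=
    Real.sq_sqrt (integral_nonneg fun x => sq_nonneg _)
  have h2 : √(∫ x, B x ^ 2 ∂μ) ^ 2 = ∫ x, B x ^ 2 ∂μ :=
    Real.sq_sqrt (integral_nonneg fun x => sq_nonneg _)
  nlinarith


lemma Hq_nonneg (ν : Measure ℝ) (κ : ℝ) (c : ℝ × ℝ) : 0 ≤ Hq ν κ c := integral_nonneg fun _ => sq_nonneg _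

/-- Joint sublinearity. -/
lemma Hq_sub (ν : Measure ℝ) [IsProbabilityMeasure ν]
    (hν : MemLp (fun z : ℝ => z) 2 ν) (κ κ' a b : ℝ) (ha : 0 ≤ a) (hb : 0 ≤ b) (c c' : ℝ × ℝ) :
    √(Hq ν (a * κ + b * κ') (a • c + b • c')) ≤ a * √(Hq ν κ c) + b * √(Hq ν κ' c') := by
  have hA := (X_memLp ν hν κ c.1 c.2).pos_part
  have hB := (X_memLp ν hν κ' c'.1 c'.2).pos_part
  have hm := minkowski (ν.prod stdG) _ _ (hA.const_mul a) (hB.const_mul b)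
    (fun x => mul_nonneg ha (le_max_right _ _)) (fun x => mul_nonneg hb (le_max_right _ _))
  have e1 : ∀ (t : ℝ) (ht : 0 ≤ t) (k : ℝ) (d : ℝ × ℝ),
      √(∫ x, (t * max (k - d.1 * x.1 - d.2 * x.2) 0) ^ 2 ∂(ν.prod stdG)) = t * √(Hq ν k d) := by
    intro t ht k d
    simp_rw [mul_pow]
    rw [integral_const_mul, Real.sqrt_mul (sq_nonneg t), Real.sqrt_sq ht]
    rfl
  rw [e1 a ha κ c, e1 b hb κ' c'] at hm
  refine le_trans (Real.sqrt_le_sqrt ?_) hm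
  refine integral_mono (X_memLp ν hν _ _ _).pos_part.integrable_sq
    ((hA.const_mul a).add (hB.const_mul b)).integrable_sq ?_
  intro p
  refine pow_le_pow_left₀ (le_max_right _ _) ?_ 2
  apply max_le
  · have h1 := mul_le_mul_of_nonneg_left (le_max_left (κ - c.1 * p.1 - c.2 * p.2) 0) ha
    have h2 := mul_le_mul_of_nonneg_left (le_max_left (κ' - c'.1 * p.1 - c'.2 * p.2) 0) hb
    simp only [Prod.fst_add, Prod.snd_add, Prod.smul_fst, Prod.smul_snd, smul_eq_mul]
    linarith
  · exact add_nonneg (mul_nonneg ha (le_max_right _ _)) (mul_nonneg hb (le_max_right _ _))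

lemma Hq_zero (ν : Measure ℝ) [IsProbabilityMeasure ν] (κ : ℝ) (hκ : 0 ≤ κ) : √(Hq ν κ 0) = κ := by
  unfold Hq
  simp [hκ]

lemma Hq_lip (ν : Measure ℝ) [IsProbabilityMeasure ν]
    (hν : MemLp (fun z : ℝ => z) 2 ν) (κ δ : ℝ) (hδ : 0 ≤ δ) (c : ℝ × ℝ) :
    √(Hq ν (κ + δ) c) ≤ √(Hq ν κ c) + δ := by
  have := Hq_sub ν hν κ δ 1 1 zero_le_one zero_le_one c 0
  simpa [Hq_zero ν δ hδ] using this

lemma Hq_mono (ν : Measure ℝ) [IsProbabilityMeasure ν]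
    (hν : MemLp (fun z : ℝ => z) 2 ν) (κ κ' : ℝ) (h : κ ≤ κ') (c : ℝ × ℝ) : Hq ν κ c ≤ Hq ν κ' c := by
  refine integral_mono (X_memLp ν hν _ _ _).pos_part.integrable_sq
    (X_memLp ν hν _ _ _).pos_part.integrable_sq fun p => ?_
  refine pow_le_pow_left₀ (le_max_right _ _) ?_ 2
  exact max_le_max (by linarith) le_rfl

lemma Hq_strict (ν : Measure ℝ) [IsProbabilityMeasure ν]
    (hν : MemLp (fun z : ℝ => z) 2 ν) (κ κ' : ℝ) (h : κ < κ') (c : ℝ × ℝ) (hpos : 0 < Hq ν κ c) :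
    Hq ν κ c < Hq ν κ' c := by
  have hA := (X_memLp ν hν κ c.1 c.2).pos_part
  have hI : Integrable (fun p : ℝ × ℝ => max (κ - c.1 * p.1 - c.2 * p.2) 0) (ν.prod stdG) :=
    hA.integrable (by norm_num)
  have h1 : 0 < ∫ p, max (κ - c.1 * p.1 - c.2 * p.2) 0 ∂(ν.prod stdG) := by
    refine lt_of_le_of_ne (integral_nonneg fun p => le_max_right _ _) fun h0 => ?_
    have := (integral_eq_zero_iff_of_nonneg (fun p => le_max_right _ _) hI).1 h0.symm
    have h2 : Hq ν κ c = ∫ p : ℝ × ℝ, (0 : ℝ) ∂(ν.prod stdG) := by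
      refine integral_congr_ae ?_
      filter_upwards [this] with p hp
      simp only [Pi.zero_apply] at hp
      simp only [hp]; norm_num
    simp at h2
    linarith
  have h3 : Hq ν κ c + 2 * (κ' - κ) * ∫ p, max (κ - c.1 * p.1 - c.2 * p.2) 0 ∂(ν.prod stdG)
      ≤ Hq ν κ' c := by
    unfold Hq
    rw [← integral_const_mul, ← integral_add hA.integrable_sq (hI.const_mul _)]
    refine integral_mono (hA.integrable_sq.add (hI.const_mul _))
      (X_memLp ν hν _ _ _).pos_part.integrable_sq fun p => ?_
    have := ps_lower (κ - c.1 * p.1 - c.2 * p.2) (-(κ' - κ))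
    have e : κ - c.1 * p.1 - c.2 * p.2 - -(κ' - κ) = κ' - c.1 * p.1 - c.2 * p.2 := by ring
    rw [e] at this
    dsimp only
    linarith
  nlinarith

lemma cross_zero (ν : Measure ℝ) [IsProbabilityMeasure ν] (κ a : ℝ) :
    ∫ p : ℝ × ℝ, max (κ - a * p.1) 0 * p.2 ∂(ν.prod stdG) = 0 := by
  rw [integral_prod_mul (fun t => max (κ - a * t) 0) (fun z => z), stdG_mean, mul_zero]

lemma a_memLp (ν : Measure ℝ) [IsProbabilityMeasure ν]
    (hν : MemLp (fun z : ℝ => z) 2 ν) (κ a : ℝ) :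
    MemLp (fun p : ℝ × ℝ => max (κ - a * p.1) 0) 2 (ν.prod stdG) := by
  simpa using (X_memLp ν hν κ a 0).pos_part

lemma z_memLp (ν : Measure ℝ) [IsProbabilityMeasure ν] : MemLp (fun p : ℝ × ℝ => p.2) 2 (ν.prod stdG) := stdG_memLp.comp_snd ν

lemma t_memLp (ν : Measure ℝ)
    (hν : MemLp (fun z : ℝ => z) 2 ν) : MemLp (fun p : ℝ × ℝ => p.1) 2 (ν.prod stdG) := hν.comp_fst stdG

lemma Hq_upper (ν : Measure ℝ) [IsProbabilityMeasure ν]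
    (hν : MemLp (fun z : ℝ => z) 2 ν) (κ a b : ℝ) : Hq ν κ (a, b) ≤ Hq ν κ (a, 0) + b ^ 2 := by
  have hA := a_memLp ν hν κ a
  have hz := z_memLp ν
  have hAz : Integrable (fun p : ℝ × ℝ => max (κ - a * p.1) 0 * p.2) (ν.prod stdG) :=
    hA.integrable_mul hz
  have hzz : ∫ p : ℝ × ℝ, p.2 ^ 2 ∂(ν.prod stdG) = 1 := by
    have := integral_prod_mul (μ := ν) (ν := stdG) (fun _ => (1:ℝ)) (fun z => z ^ 2)
    simpa [stdG_sq] using this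
  have e : Hq ν κ (a, 0) + b ^ 2 = ∫ p : ℝ × ℝ, ((max (κ - a * p.1) 0) ^ 2
      - 2 * b * (max (κ - a * p.1) 0 * p.2) + b ^ 2 * p.2 ^ 2) ∂(ν.prod stdG) := by
    rw [integral_add (int_fsub hA.integrable_sq (hAz.const_mul _)) (hz.integrable_sq.const_mul _),
      integral_sub hA.integrable_sq (hAz.const_mul _), integral_const_mul, integral_const_mul,
      cross_zero ν, hzz]
    simp [Hq]
  rw [e]
  refine integral_mono (X_memLp ν hν _ _ _).pos_part.integrable_sq
    ((hA.integrable_sq.sub (hAz.const_mul _)).add (hz.integrable_sq.const_mul _)) fun p => ?_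
  have := ps_upper (κ - a * p.1) (b * p.2)
  dsimp only
  linarith

lemma Hq_lower (ν : Measure ℝ) [IsProbabilityMeasure ν]
    (hν : MemLp (fun z : ℝ => z) 2 ν) (h1 : 0 < ∫ t, (if t < 0 then (1:ℝ) else 0) ∂ν)
    (h2 : 0 < ∫ t, (if 0 < t then (1:ℝ) else 0) ∂ν) :
    ∃ m : ℝ, 0 < m ∧ ∀ κ : ℝ, 0 ≤ κ → ∀ c : ℝ × ℝ, κ ^ 2 * m ≤ Hq ν κ c := by
  refine ⟨min _ _, lt_min h1 h2, ?_⟩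
  rintro κ hκ ⟨a, b⟩
  have hA := a_memLp ν hν κ a
  have hz := z_memLp ν
  have hAz : Integrable (fun p : ℝ × ℝ => max (κ - a * p.1) 0 * p.2) (ν.prod stdG) :=
    hA.integrable_mul hz
  have key : ∀ φ : ℝ → ℝ, Measurable φ → (∀ t, 0 ≤ φ t) → (∀ t, φ t ≤ 1) →
      (∀ t, κ ^ 2 * φ t ≤ (max (κ - a * t) 0) ^ 2) → κ ^ 2 * ∫ t, φ t ∂ν ≤ Hq ν κ (a, b) := by
    intro φ hm h0 h1 hφ
    have hi : Integrable (fun p : ℝ × ℝ => φ p.1) (ν.prod stdG) := by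
      refine Integrable.of_bound (hm.comp measurable_fst).aestronglyMeasurable 1 ?_
      filter_upwards with p
      rw [Real.norm_eq_abs, abs_of_nonneg (h0 _)]
      exact h1 _
    have e1 : ∫ p : ℝ × ℝ, φ p.1 ∂(ν.prod stdG) = ∫ t, φ t ∂ν := by
      have := integral_prod_mul (μ := ν) (ν := stdG) φ (fun _ => (1:ℝ))
      simpa using this
    have e : κ ^ 2 * ∫ t, φ t ∂ν = ∫ p : ℝ × ℝ, (κ ^ 2 * φ p.1
        - 2 * b * (max (κ - a * p.1) 0 * p.2)) ∂(ν.prod stdG) := by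
      rw [integral_sub (hi.const_mul _) (hAz.const_mul _), integral_const_mul,
        integral_const_mul, cross_zero ν, e1]
      simp
    rw [e]
    refine integral_mono ((hi.const_mul _).sub (hAz.const_mul _))
      (X_memLp ν hν _ _ _).pos_part.integrable_sq fun p => ?_
    have := ps_lower (κ - a * p.1) (b * p.2)
    have := hφ p.1
    dsimp only
    linarith
  rcases le_total 0 a with ha | ha
  · refine le_trans (mul_le_mul_of_nonneg_left (min_le_left _ _) (sq_nonneg κ)) (key _
      (Measurable.ite measurableSet_Iio measurable_const measurable_const) ?_ ?_ ?_)
    · intro t; split_ifs <;> simp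
    · intro t; split_ifs <;> simp
    · intro t
      split_ifs with ht
      · rw [mul_one]
        refine pow_le_pow_left₀ hκ (le_trans ?_ (le_max_left _ _)) 2
        nlinarith
      · rw [mul_zero]; positivity
  · refine le_trans (mul_le_mul_of_nonneg_left (min_le_right _ _) (sq_nonneg κ)) (key _
      (Measurable.ite measurableSet_Ioi measurable_const measurable_const) ?_ ?_ ?_)
    · intro t; split_ifs <;> simp
    · intro t; split_ifs <;> simp
    · intro t
      split_ifs with ht
      · rw [mul_one]
        refine pow_le_pow_left₀ hκ (le_trans ?_ (le_max_left _ _)) 2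
        nlinarith
      · rw [mul_zero]; positivity

lemma Hq_diff (ν : Measure ℝ) [IsProbabilityMeasure ν]
    (hν : MemLp (fun z : ℝ => z) 2 ν) (κ : ℝ) (c : ℝ × ℝ) : DifferentiableAt ℝ (Hq ν κ) c := by
  have hX := (X_memLp ν hν κ c.1 c.2).pos_part
  have ht := t_memLp ν hν
  have hz := z_memLp ν
  have hXt : Integrable (fun p : ℝ × ℝ => max (κ - c.1 * p.1 - c.2 * p.2) 0 * p.1)
    (ν.prod stdG) := hX.integrable_mul ht
  have hXz : Integrable (fun p : ℝ × ℝ => max (κ - c.1 * p.1 - c.2 * p.2) 0 * p.2)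
    (ν.prod stdG) := hX.integrable_mul hz
  set A := ∫ p : ℝ × ℝ, max (κ - c.1 * p.1 - c.2 * p.2) 0 * p.1 ∂(ν.prod stdG) with hAdef
  set B := ∫ p : ℝ × ℝ, max (κ - c.1 * p.1 - c.2 * p.2) 0 * p.2 ∂(ν.prod stdG) with hBdef
  set Ct := ∫ p : ℝ × ℝ, p.1 ^ 2 ∂(ν.prod stdG) with hCt
  set Cz := ∫ p : ℝ × ℝ, p.2 ^ 2 ∂(ν.prod stdG) with hCz
  have hCt0 : 0 ≤ Ct := integral_nonneg fun _ => sq_nonneg _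
  have hCz0 : 0 ≤ Cz := integral_nonneg fun _ => sq_nonneg _
  have hlo : ∀ d : ℝ × ℝ, Hq ν κ c - 2 * (d.1 - c.1) * A - 2 * (d.2 - c.2) * B ≤ Hq ν κ d := by
    intro d
    rw [hAdef, hBdef, ← integral_const_mul, ← integral_const_mul]
    unfold Hq
    have i1 := int_fsub hX.integrable_sq (hXt.const_mul (2 * (d.1 - c.1)))
    have i2 := int_fsub i1 (hXz.const_mul (2 * (d.2 - c.2)))
    rw [← integral_sub hX.integrable_sq (hXt.const_mul _), ← integral_sub i1 (hXz.const_mul _)]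
    refine integral_mono i2 (X_memLp ν hν _ _ _).pos_part.integrable_sq fun p => ?_
    have := ps_lower (κ - c.1 * p.1 - c.2 * p.2) ((d.1 - c.1) * p.1 + (d.2 - c.2) * p.2)
    have e : κ - c.1 * p.1 - c.2 * p.2 - ((d.1 - c.1) * p.1 + (d.2 - c.2) * p.2)
      = κ - d.1 * p.1 - d.2 * p.2 := by ring
    rw [e] at this
    dsimp only [Pi.sub_apply]
    linarith
  have hup : ∀ d : ℝ × ℝ, Hq ν κ d ≤ Hq ν κ c - 2 * (d.1 - c.1) * A - 2 * (d.2 - c.2) * B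
      + 2 * (d.1 - c.1) ^ 2 * Ct + 2 * (d.2 - c.2) ^ 2 * Cz := by
    intro d
    rw [hAdef, hBdef, hCt, hCz, ← integral_const_mul, ← integral_const_mul, ← integral_const_mul,
      ← integral_const_mul]
    unfold Hq
    have i1 := int_fsub hX.integrable_sq (hXt.const_mul (2 * (d.1 - c.1)))
    have i2 := int_fsub i1 (hXz.const_mul (2 * (d.2 - c.2)))
    have i3 := i2.fun_add (ht.integrable_sq.const_mul (2 * (d.1 - c.1) ^ 2))
    have i4 := i3.fun_add (hz.integrable_sq.const_mul (2 * (d.2 - c.2) ^ 2))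
    rw [← integral_sub hX.integrable_sq (hXt.const_mul _), ← integral_sub i1 (hXz.const_mul _),
      ← integral_add i2 (ht.integrable_sq.const_mul _),
      ← integral_add i3 (hz.integrable_sq.const_mul _)]
    refine integral_mono (X_memLp ν hν _ _ _).pos_part.integrable_sq i4 fun p => ?_
    have := ps_upper (κ - c.1 * p.1 - c.2 * p.2) ((d.1 - c.1) * p.1 + (d.2 - c.2) * p.2)
    have e : κ - c.1 * p.1 - c.2 * p.2 - ((d.1 - c.1) * p.1 + (d.2 - c.2) * p.2)
      = κ - d.1 * p.1 - d.2 * p.2 := by ring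
    rw [e] at this
    have sq := sq_nonneg ((d.1 - c.1) * p.1 - (d.2 - c.2) * p.2)
    dsimp only [Pi.sub_apply, Pi.add_apply]
    nlinarith
  let Lf : ℝ × ℝ → ℝ := fun d => Hq ν κ c - 2 * (d.1 - c.1) * A - 2 * (d.2 - c.2) * B
  have hO : (fun d => Hq ν κ d - Lf d) =O[nhds c] fun d => ‖d - c‖ ^ 2 := by
    refine Asymptotics.IsBigO.of_bound (2 * Ct + 2 * Cz) ?_
    filter_upwards with d
    have l := hlo d
    have u := hup d
    have n1 : (d.1 - c.1) ^ 2 ≤ ‖d - c‖ ^ 2 := by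
      have := norm_fst_le (d - c)
      rw [← sq_abs]
      exact pow_le_pow_left₀ (abs_nonneg _) this 2
    have n2 : (d.2 - c.2) ^ 2 ≤ ‖d - c‖ ^ 2 := by
      have := norm_snd_le (d - c)
      rw [← sq_abs]
      exact pow_le_pow_left₀ (abs_nonneg _) this 2
    rw [Real.norm_eq_abs, Real.norm_eq_abs, abs_of_nonneg (sq_nonneg ‖d - c‖), abs_of_nonneg (by simp only [Lf]; linarith)]
    simp only [Lf]
    nlinarith [mul_le_mul_of_nonneg_right n1 hCt0, mul_le_mul_of_nonneg_right n2 hCz0]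
  have h0 : HasFDerivAt (fun d => Hq ν κ d - Lf d) (0 : ℝ × ℝ →L[ℝ] ℝ) c :=
    Asymptotics.IsBigO.hasFDerivAt hO (by norm_num)
  have h1 : DifferentiableAt ℝ (fun d => Hq ν κ d - Lf d) c := h0.differentiableAt
  have h2 : DifferentiableAt ℝ Lf c := by
    simp only [Lf]; fun_prop
  have := h1.add h2
  have e : Hq ν κ = (fun d => Hq ν κ d - Lf d) + Lf := by
    ext d; simp
  rw [e]; exact this


lemma cap_concave (d e : ℝ × ℝ) (hd : d.1 ^ 2 + d.2 ^ 2 ≤ 1) (he : e.1 ^ 2 + e.2 ^ 2 ≤ 1)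
    (a b : ℝ) (ha : 0 ≤ a) (hb : 0 ≤ b) (hab : a + b = 1) :
    a * √(1 - d.1 ^ 2 - d.2 ^ 2) + b * √(1 - e.1 ^ 2 - e.2 ^ 2)
      ≤ √(1 - (a • d + b • e).1 ^ 2 - (a • d + b • e).2 ^ 2) := by
  apply Real.le_sqrt_of_sq_le
  have hu := Real.sq_sqrt (show 0 ≤ 1 - d.1 ^ 2 - d.2 ^ 2 by linarith)
  have hv := Real.sq_sqrt (show 0 ≤ 1 - e.1 ^ 2 - e.2 ^ 2 by linarith)
  set u := √(1 - d.1 ^ 2 - d.2 ^ 2)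
  set v := √(1 - e.1 ^ 2 - e.2 ^ 2)
  simp only [Prod.fst_add, Prod.snd_add, Prod.smul_fst, Prod.smul_snd, smul_eq_mul]
  have h1 : u * v + d.1 * e.1 + d.2 * e.2 ≤ 1 := by
    nlinarith [sq_nonneg (u - v), sq_nonneg (d.1 - e.1), sq_nonneg (d.2 - e.2)]
  have h2 := mul_le_mul_of_nonneg_left h1 (mul_nonneg ha hb)
  have h3 : 1 = a ^ 2 + 2 * (a * b) + b ^ 2 := by
    calc (1:ℝ) = (a + b) ^ 2 := by rw [hab]; norm_num
      _ = _ := by ring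
  have h4 : (a * u + b * v) ^ 2 + (a * d.1 + b * e.1) ^ 2 + (a * d.2 + b * e.2) ^ 2
      = a ^ 2 * (u ^ 2 + d.1 ^ 2 + d.2 ^ 2) + b ^ 2 * (v ^ 2 + e.1 ^ 2 + e.2 ^ 2)
        + 2 * (a * b * (u * v + d.1 * e.1 + d.2 * e.2)) := by ring
  have h5 : u ^ 2 + d.1 ^ 2 + d.2 ^ 2 = 1 := by linarith
  have h6 : v ^ 2 + e.1 ^ 2 + e.2 ^ 2 = 1 := by linarith
  rw [h5, h6] at h4
  linarith

lemma cap_strict (d e : ℝ × ℝ) (hd : d.1 ^ 2 + d.2 ^ 2 ≤ 1) (he : e.1 ^ 2 + e.2 ^ 2 ≤ 1)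
    (hne : d ≠ e) :
    (1/2 : ℝ) * √(1 - d.1 ^ 2 - d.2 ^ 2) + (1/2) * √(1 - e.1 ^ 2 - e.2 ^ 2)
      < √(1 - ((1/2 : ℝ) • d + (1/2 : ℝ) • e).1 ^ 2 - ((1/2 : ℝ) • d + (1/2 : ℝ) • e).2 ^ 2) := by
  apply Real.lt_sqrt_of_sq_lt
  have hu := Real.sq_sqrt (show 0 ≤ 1 - d.1 ^ 2 - d.2 ^ 2 by linarith)
  have hv := Real.sq_sqrt (show 0 ≤ 1 - e.1 ^ 2 - e.2 ^ 2 by linarith)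
  set u := √(1 - d.1 ^ 2 - d.2 ^ 2)
  set v := √(1 - e.1 ^ 2 - e.2 ^ 2)
  simp only [Prod.fst_add, Prod.snd_add, Prod.smul_fst, Prod.smul_snd, smul_eq_mul]
  have h0 : 0 < (d.1 - e.1) ^ 2 + (d.2 - e.2) ^ 2 := by
    by_contra hcon
    apply hne
    have h1 : (d.1 - e.1) = 0 := by
      apply pow_eq_zero_iff (two_ne_zero) |>.1
      nlinarith [sq_nonneg (d.1 - e.1), sq_nonneg (d.2 - e.2)]
    have h2 : (d.2 - e.2) = 0 := by
      apply pow_eq_zero_iff (two_ne_zero) |>.1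
      nlinarith [sq_nonneg (d.1 - e.1), sq_nonneg (d.2 - e.2)]
    exact Prod.ext (by linarith) (by linarith)
  nlinarith [sq_nonneg (u - v)]

/-- The objective in abstract form. -/
def Rq (ν : Measure ℝ) (s γ₁ γs κ : ℝ) (d : ℝ × ℝ) : ℝ :=
  √(Hq ν κ (s • d)) - γ₁ * d.2 - γs * √(1 - d.1 ^ 2 - d.2 ^ 2)

lemma K_conv (d e : ℝ × ℝ) (hd : d ∈ Kwide) (he : e ∈ Kwide)
    (a b : ℝ) (ha : 0 ≤ a) (hb : 0 ≤ b) (hab : a + b = 1) : a • d + b • e ∈ Kwide := by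
  obtain ⟨h1, h2⟩ := hd
  obtain ⟨h3, h4⟩ := he
  refine ⟨?_, ?_⟩
  · simp only [Prod.fst_add, Prod.snd_add, Prod.smul_fst, Prod.smul_snd, smul_eq_mul]
    have h5 : d.1 * e.1 + d.2 * e.2 ≤ 1 := by
      nlinarith [sq_nonneg (d.1 - e.1), sq_nonneg (d.2 - e.2)]
    have h6 := mul_le_mul_of_nonneg_left h5 (mul_nonneg ha hb)
    have h7 := mul_le_mul_of_nonneg_left h1 (mul_nonneg ha ha)
    have h8 := mul_le_mul_of_nonneg_left h3 (mul_nonneg hb hb)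
    have h9 : b = 1 - a := by linarith
    subst h9
    nlinarith
  · simp only [Prod.snd_add, Prod.smul_snd, smul_eq_mul]
    positivity

lemma K_compact : IsCompact Kwide := by
  apply Metric.isCompact_of_isClosed_isBounded
  · have h1 : IsClosed {d : ℝ × ℝ | d.1 ^ 2 + d.2 ^ 2 ≤ 1} :=
      isClosed_le (by fun_prop) continuous_const
    have h2 : IsClosed {d : ℝ × ℝ | 0 ≤ d.2} := isClosed_le continuous_const continuous_snd
    exact h1.inter h2
  · refine (Metric.isBounded_closedBall (x := (0 : ℝ × ℝ)) (r := 1)).subset ?_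
    rintro ⟨x, y⟩ ⟨h, _⟩
    simp only at h
    rw [mem_closedBall_zero_iff, Prod.norm_def]
    refine max_le ?_ ?_
    · exact abs_le_one_iff_mul_self_le_one.2 (by nlinarith)
    · exact abs_le_one_iff_mul_self_le_one.2 (by nlinarith)

lemma K_zero : (0 : ℝ × ℝ) ∈ Kwide := by simp [Kwide]

lemma Rq_conv (ν : Measure ℝ) [IsProbabilityMeasure ν]
    (hν : MemLp (fun z : ℝ => z) 2 ν) (s γ₁ γs κ : ℝ) (hγs : 0 < γs)
    (d e : ℝ × ℝ) (hd : d ∈ Kwide) (he : e ∈ Kwide)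
    (a b : ℝ) (ha : 0 ≤ a) (hb : 0 ≤ b) (hab : a + b = 1) :
    Rq ν s γ₁ γs κ (a • d + b • e) ≤ a * Rq ν s γ₁ γs κ d + b * Rq ν s γ₁ γs κ e := by
  have h1 := Hq_sub ν hν κ κ a b ha hb (s • d) (s • e)
  have h2 := cap_concave d e hd.1 he.1 a b ha hb hab
  rw [← add_mul, hab, one_mul] at h1
  have e1 : a • s • d + b • s • e = s • (a • d + b • e) := by
    rw [smul_add, smul_comm a s, smul_comm b s]
  rw [e1] at h1
  have h3 := mul_le_mul_of_nonneg_left h2 hγs.le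
  have e2 : (a • d + b • e).2 = a * d.2 + b * e.2 := by simp
  unfold Rq
  rw [e2] at h3 ⊢
  linarith

lemma Rq_strict (ν : Measure ℝ) [IsProbabilityMeasure ν]
    (hν : MemLp (fun z : ℝ => z) 2 ν) (s γ₁ γs κ : ℝ) (hγs : 0 < γs)
    (d e : ℝ × ℝ) (hd : d ∈ Kwide) (he : e ∈ Kwide) (hne : d ≠ e) :
    Rq ν s γ₁ γs κ ((1/2 : ℝ) • d + (1/2 : ℝ) • e)
      < (1/2) * Rq ν s γ₁ γs κ d + (1/2) * Rq ν s γ₁ γs κ e := by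
  have h1 := Hq_sub ν hν κ κ (1/2) (1/2) (by norm_num) (by norm_num) (s • d) (s • e)
  have h2 := cap_strict d e hd.1 he.1 hne
  rw [← add_mul, add_halves, one_mul] at h1
  have e1 : (1/2 : ℝ) • s • d + (1/2 : ℝ) • s • e = s • ((1/2 : ℝ) • d + (1/2 : ℝ) • e) := by
    rw [smul_add, smul_comm _ s, smul_comm _ s]
  rw [e1] at h1
  have h3 := mul_lt_mul_of_pos_left h2 hγs
  have e2 : ((1/2 : ℝ) • d + (1/2 : ℝ) • e).2 = (1/2) * d.2 + (1/2) * e.2 := by simp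
  unfold Rq
  rw [e2] at h3 ⊢
  linarith

lemma Rq_cont (ν : Measure ℝ) [IsProbabilityMeasure ν]
    (hν : MemLp (fun z : ℝ => z) 2 ν) (s γ₁ γs κ : ℝ) : Continuous (Rq ν s γ₁ γs κ) := by
  have h : Continuous (Hq ν κ) :=
    Differentiable.continuous (𝕜 := ℝ) (fun c => Hq_diff ν hν κ c)
  have h2 : Continuous fun d : ℝ × ℝ => Hq ν κ (s • d) := h.comp (continuous_const_smul s)
  unfold Rq
  fun_prop

lemma Rq_diff (ν : Measure ℝ) [IsProbabilityMeasure ν]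
    (hν : MemLp (fun z : ℝ => z) 2 ν) (s γ₁ γs κ : ℝ) (d : ℝ × ℝ)
    (hH : 0 < Hq ν κ (s • d)) (hd : d.1 ^ 2 + d.2 ^ 2 < 1) :
    DifferentiableAt ℝ (Rq ν s γ₁ γs κ) d := by
  have h2 : DifferentiableAt ℝ (fun d : ℝ × ℝ => Hq ν κ (s • d)) d :=
    DifferentiableAt.comp (g := Hq ν κ) (f := fun d : ℝ × ℝ => s • d) d
      (Hq_diff ν hν κ (s • d)) (by fun_prop)
  have h3 := h2.sqrt hH.ne'
  have h4 : DifferentiableAt ℝ (fun d : ℝ × ℝ => √(1 - d.1 ^ 2 - d.2 ^ 2)) d := by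
    apply DifferentiableAt.sqrt (by fun_prop)
    linarith
  unfold Rq
  exact (h3.sub (by fun_prop)).sub (h4.const_mul _)

lemma Rq_exists_min (ν : Measure ℝ) [IsProbabilityMeasure ν]
    (hν : MemLp (fun z : ℝ => z) 2 ν) (s γ₁ γs κ : ℝ) :
    ∃ d ∈ Kwide, ∀ e ∈ Kwide, Rq ν s γ₁ γs κ d ≤ Rq ν s γ₁ γs κ e := by
  obtain ⟨d, hd, h⟩ := K_compact.exists_isMinOn ⟨0, K_zero⟩ (Rq_cont ν hν s γ₁ γs κ).continuousOn
  exact ⟨d, hd, fun e he => h he⟩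

lemma Rq_unique_min (ν : Measure ℝ) [IsProbabilityMeasure ν]
    (hν : MemLp (fun z : ℝ => z) 2 ν) (s γ₁ γs κ : ℝ) (hγs : 0 < γs) (d e : ℝ × ℝ)
    (hd : d ∈ Kwide) (he : e ∈ Kwide)
    (h1 : ∀ x ∈ Kwide, Rq ν s γ₁ γs κ d ≤ Rq ν s γ₁ γs κ x)
    (h2 : ∀ x ∈ Kwide, Rq ν s γ₁ γs κ e ≤ Rq ν s γ₁ γs κ x) : d = e := by
  by_contra hne
  have h3 := Rq_strict ν hν s γ₁ γs κ hγs d e hd he hne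
  have hm := K_conv d e hd he (1/2) (1/2) (by norm_num) (by norm_num) (by norm_num)
  have := h1 _ hm
  have := h2 _ hm
  linarith

lemma Rq_min_disk (ν : Measure ℝ) [IsProbabilityMeasure ν]
    (hν : MemLp (fun z : ℝ => z) 2 ν) (s γ₁ γs κ : ℝ) (hγ₁ : 0 < γ₁) (hγs : 0 < γs) (hκ : 0 < κ)
    (d : ℝ × ℝ) (hd : d ∈ Kwide)
    (h1 : ∀ x ∈ Kwide, Rq ν s γ₁ γs κ d ≤ Rq ν s γ₁ γs κ x) : d.1 ^ 2 + d.2 ^ 2 < 1 := by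
  by_contra hcon
  have heq : d.1 ^ 2 + d.2 ^ 2 = 1 := le_antisymm hd.1 (not_lt.1 hcon)
  have hS : 0 < κ + γ₁ + γs := by positivity
  obtain ⟨ε, hε0, hε1, hε⟩ : ∃ ε : ℝ, 0 < ε ∧ ε < 1 ∧ ε * (κ + γ₁) < γs := by
    refine ⟨γs / (κ + γ₁ + γs), by positivity, ?_, ?_⟩
    · rw [div_lt_one hS]; linarith
    · rw [div_mul_eq_mul_div, div_lt_iff₀ hS]; nlinarith
  have ht1 : 0 ≤ 1 - ε ^ 2 := by nlinarith
  have hx : (1 - ε ^ 2) • d ∈ Kwide := by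
    have := K_conv d 0 hd K_zero (1 - ε ^ 2) (ε ^ 2) ht1 (by positivity) (by ring)
    simpa using this
  have hF := Hq_sub ν hν κ κ (1 - ε ^ 2) (ε ^ 2) ht1 (by positivity) (s • d) 0
  rw [Hq_zero ν κ hκ.le, ← add_mul, sub_add_cancel, one_mul, smul_zero, add_zero,
    smul_comm] at hF
  have hc : ε ≤ √(1 - ((1 - ε ^ 2) • d).1 ^ 2 - ((1 - ε ^ 2) • d).2 ^ 2) := by
    apply Real.le_sqrt_of_sq_le
    simp only [Prod.smul_fst, Prod.smul_snd, smul_eq_mul]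
    have : 1 - ((1 - ε ^ 2) * d.1) ^ 2 - ((1 - ε ^ 2) * d.2) ^ 2
      = 1 - (1 - ε ^ 2) ^ 2 * (d.1 ^ 2 + d.2 ^ 2) := by ring
    rw [this, heq]
    nlinarith
  have h2 := h1 _ hx
  unfold Rq at h2
  have e0 : 1 - d.1 ^ 2 - d.2 ^ 2 = 0 := by linarith
  rw [e0, Real.sqrt_zero] at h2
  have h3 := mul_le_mul_of_nonneg_left hc hγs.le
  have hd2 : d.2 ≤ 1 := by nlinarith [sq_nonneg d.1, hd.2]
  have e2 : ((1 - ε ^ 2) • d).2 = (1 - ε ^ 2) * d.2 := by simp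
  rw [e2] at h2 h3
  have hF0 := Real.sqrt_nonneg (Hq ν κ (s • d))
  have h4 : γs * ε ≤ ε ^ 2 * κ + γ₁ * ε ^ 2 * d.2 := by nlinarith [sq_nonneg ε]
  have h5 : γ₁ * ε ^ 2 * d.2 ≤ γ₁ * ε ^ 2 := by
    have : 0 ≤ γ₁ * ε ^ 2 := by positivity
    nlinarith
  have h6 : ε * (ε * (κ + γ₁)) < ε * γs := mul_lt_mul_of_pos_left hε hε0
  nlinarith

lemma Rq_min_pos (ν : Measure ℝ) [IsProbabilityMeasure ν]
    (hν : MemLp (fun z : ℝ => z) 2 ν) (s γ₁ γs κ : ℝ) (hγ₁ : 0 < γ₁) (hγs : 0 < γs)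
    (d : ℝ × ℝ) (hH : 0 < Hq ν κ (s • d)) (hd : d ∈ Kwide) (hd1 : d.1 ^ 2 + d.2 ^ 2 < 1)
    (h1 : ∀ x ∈ Kwide, Rq ν s γ₁ γs κ d ≤ Rq ν s γ₁ γs κ x) : 0 < d.2 := by
  obtain ⟨x, y⟩ := d
  by_contra hcon
  have hy : y = 0 := le_antisymm (not_lt.1 hcon) hd.2
  subst hy
  simp only [Prod.smul_mk, smul_eq_mul, mul_zero] at hH hd1
  have hF := Real.sqrt_pos.2 hH
  have hA : 0 < √(1 - x ^ 2) := Real.sqrt_pos.2 (by nlinarith)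
  have hF2 := Real.sq_sqrt hH.le
  have hA2 := Real.sq_sqrt (show 0 ≤ 1 - x ^ 2 by nlinarith)
  set F := √(Hq ν κ (s * x, 0)) with hFdef
  set A := √(1 - x ^ 2) with hAdef
  have hC : 0 < s ^ 2 / F + γs / A := by positivity
  obtain ⟨t, ht0, htA, ht⟩ : ∃ t : ℝ, 0 < t ∧ t ≤ A ∧ t * (s ^ 2 / F + γs / A) < γ₁ := by
    refine ⟨min A (γ₁ / (2 * (s ^ 2 / F + γs / A))), lt_min hA (by positivity), min_le_left _ _, ?_⟩
    refine lt_of_le_of_lt (mul_le_mul_of_nonneg_right (min_le_right _ _) hC.le) ?_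
    rw [div_mul_eq_mul_div, div_lt_iff₀ (by positivity)]
    nlinarith
  have hx : ((x, t) : ℝ × ℝ) ∈ Kwide := by
    refine ⟨?_, ht0.le⟩
    simp only
    nlinarith
  have h2 := h1 _ hx
  unfold Rq at h2
  simp only [Prod.smul_mk, smul_eq_mul, mul_zero] at h2
  have hup := Hq_upper ν hν κ (s * x) (s * t)
  have b1 : √(Hq ν κ (s * x, s * t)) ≤ F + s ^ 2 / F * t ^ 2 := by
    apply Real.sqrt_le_iff.2
    refine ⟨by positivity, hup.trans ?_⟩
    have e : s ^ 2 / F * F = s ^ 2 := by field_simp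
    have : (F + s ^ 2 / F * t ^ 2) ^ 2 = F ^ 2 + 2 * (s ^ 2 / F * F) * t ^ 2
      + (s ^ 2 / F * t ^ 2) ^ 2 := by ring
    rw [this, e, hF2]
    nlinarith [sq_nonneg (s ^ 2 / F * t ^ 2), sq_nonneg (s * t)]
  have b2 : A - t ^ 2 / A ≤ √(1 - x ^ 2 - t ^ 2) := by
    apply Real.le_sqrt_of_sq_le
    have e : t ^ 2 / A * A = t ^ 2 := by field_simp
    have l : t ^ 2 / A ≤ A := by rw [div_le_iff₀ hA]; nlinarith
    have l0 : 0 ≤ t ^ 2 / A := by positivity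
    nlinarith
  have e3 : √(1 - x ^ 2 - 0 ^ 2) = A := by rw [hAdef]; congr 1; ring
  rw [e3, ← hFdef] at h2
  have b3 := mul_le_mul_of_nonneg_left b2 hγs.le
  have b4 : t * (t * (s ^ 2 / F + γs / A)) < t * γ₁ := mul_lt_mul_of_pos_left ht ht0
  have b5 : γs * (t ^ 2 / A) = t ^ 2 * (γs / A) := by ring
  nlinarith

lemma Rq_stat_min (ν : Measure ℝ) [IsProbabilityMeasure ν]
    (hν : MemLp (fun z : ℝ => z) 2 ν) (s γ₁ γs κ : ℝ) (hγs : 0 < γs)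
    (d : ℝ × ℝ) (hH : 0 < Hq ν κ (s • d)) (hd : d ∈ Kwide) (hd1 : d.1 ^ 2 + d.2 ^ 2 < 1)
    (h0 : fderiv ℝ (Rq ν s γ₁ γs κ) d = 0) :
    ∀ x ∈ Kwide, Rq ν s γ₁ γs κ d ≤ Rq ν s γ₁ γs κ x := by
  intro x hx
  have hD := (Rq_diff ν hν s γ₁ γs κ d hH hd1).hasFDerivAt
  rw [h0] at hD
  have hg : HasDerivAt (fun t : ℝ => d + t • (x - d)) (x - d) 0 := by
    have := ((hasDerivAt_id (0:ℝ)).smul_const (x - d)).const_add d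
    simpa using this
  have hD' : HasFDerivAt (Rq ν s γ₁ γs κ) (0 : ℝ × ℝ →L[ℝ] ℝ) (d + (0:ℝ) • (x - d)) := by
    simpa using hD
  have hc := hD'.comp_hasDerivAt (0:ℝ) hg
  have hs := hc.tendsto_slope_zero_right
  simp only [Function.comp, zero_smul, add_zero, zero_add, _root_.zero_apply] at hs
  by_contra hlt
  have hle : (0:ℝ) ≤ Rq ν s γ₁ γs κ x - Rq ν s γ₁ γs κ d := by
    refine le_of_tendsto hs ?_
    filter_upwards [Ioo_mem_nhdsGT (show (0:ℝ) < 1 by norm_num)] with t ht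
    have := Rq_conv ν hν s γ₁ γs κ hγs d x hd hx (1 - t) t (by linarith [ht.2]) ht.1.le (by ring)
    have e : (1 - t) • d + t • x = d + t • (x - d) := by
      rw [sub_smul, one_smul, smul_sub]; abel
    rw [e] at this
    rw [smul_eq_mul, inv_mul_le_iff₀ ht.1]
    linarith
  linarith

lemma Rq_partA (ν : Measure ℝ) [IsProbabilityMeasure ν]
    (hν : MemLp (fun z : ℝ => z) 2 ν) (s γ₁ γs κ : ℝ) (hγ₁ : 0 < γ₁) (hγs : 0 < γs)
    (hκ : 0 < κ) (hH : ∀ c, 0 < Hq ν κ c) :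
    ∃ d : ℝ × ℝ, d ∈ Kwide
        ∧ (∀ d' ∈ Kwide, Rq ν s γ₁ γs κ d ≤ Rq ν s γ₁ γs κ d')
        ∧ (∀ d' ∈ Kwide, (∀ d'' ∈ Kwide,
              Rq ν s γ₁ γs κ d' ≤ Rq ν s γ₁ γs κ d'') → d' = d)
        ∧ d.1 ^ 2 + d.2 ^ 2 < 1 ∧ 0 < d.2
        ∧ fderiv ℝ (Rq ν s γ₁ γs κ) d = 0
        ∧ (∀ d' : ℝ × ℝ, d'.1 ^ 2 + d'.2 ^ 2 < 1 → 0 < d'.2 →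
            fderiv ℝ (Rq ν s γ₁ γs κ) d' = 0 → d' = d) := by
  obtain ⟨d, hd, hmin⟩ := Rq_exists_min ν hν s γ₁ γs κ
  have hd1 := Rq_min_disk ν hν s γ₁ γs κ hγ₁ hγs hκ d hd hmin
  have hd2 := Rq_min_pos ν hν s γ₁ γs κ hγ₁ hγs d (hH _) hd hd1 hmin
  refine ⟨d, hd, hmin, fun e he h => Rq_unique_min ν hν s γ₁ γs κ hγs e d he hd h hmin,
    hd1, hd2, ?_, ?_⟩
  · apply IsLocalMin.fderiv_eq_zero
    have o1 : IsOpen {e : ℝ × ℝ | e.1 ^ 2 + e.2 ^ 2 < 1} :=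
      isOpen_lt (by fun_prop) continuous_const
    have o2 : IsOpen {e : ℝ × ℝ | 0 < e.2} := isOpen_lt continuous_const continuous_snd
    have ho : IsOpen {e : ℝ × ℝ | e.1 ^ 2 + e.2 ^ 2 < 1 ∧ 0 < e.2} := o1.inter o2
    filter_upwards [ho.mem_nhds ⟨hd1, hd2⟩] with e he
    exact hmin e ⟨he.1.le, he.2.le⟩
  · intro e he1 he2 he0
    have heK : e ∈ Kwide := ⟨he1.le, he2.le⟩
    exact Rq_unique_min ν hν s γ₁ γs κ hγs e d heK hd
      (Rq_stat_min ν hν s γ₁ γs κ hγs e (hH _) heK he1 he0) hmin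

/-- The minimal value. -/
def Tq (ν : Measure ℝ) (s γ₁ γs κ : ℝ) : ℝ := sInf (Rq ν s γ₁ γs κ '' Kwide)

lemma Tq_spec (ν : Measure ℝ) [IsProbabilityMeasure ν]
    (hν : MemLp (fun z : ℝ => z) 2 ν) (s γ₁ γs κ : ℝ) :
    ∃ d ∈ Kwide, Tq ν s γ₁ γs κ = Rq ν s γ₁ γs κ d ∧
      ∀ e ∈ Kwide, Tq ν s γ₁ γs κ ≤ Rq ν s γ₁ γs κ e := by
  obtain ⟨d, hd, hmin⟩ := Rq_exists_min ν hν s γ₁ γs κ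
  have : IsLeast (Rq ν s γ₁ γs κ '' Kwide) (Rq ν s γ₁ γs κ d) := by
    refine ⟨⟨d, hd, rfl⟩, ?_⟩
    rintro _ ⟨e, he, rfl⟩
    exact hmin e he
  have e : Tq ν s γ₁ γs κ = Rq ν s γ₁ γs κ d := this.csInf_eq
  exact ⟨d, hd, e, fun x hx => e ▸ hmin x hx⟩

lemma Tq_mono (ν : Measure ℝ) [IsProbabilityMeasure ν]
    (hν : MemLp (fun z : ℝ => z) 2 ν) (s γ₁ γs : ℝ) : Monotone (Tq ν s γ₁ γs) := by
  intro κ κ' h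
  obtain ⟨d, hd, e, -⟩ := Tq_spec ν hν s γ₁ γs κ'
  obtain ⟨-, -, -, hle⟩ := Tq_spec ν hν s γ₁ γs κ
  rw [e]
  refine (hle d hd).trans ?_
  have := Real.sqrt_le_sqrt (Hq_mono ν hν κ κ' h (s • d))
  unfold Rq
  linarith

lemma Tq_strict (ν : Measure ℝ) [IsProbabilityMeasure ν]
    (hν : MemLp (fun z : ℝ => z) 2 ν) (s γ₁ γs : ℝ)
    (hH : ∀ κ, 0 < κ → ∀ c, 0 < Hq ν κ c) : StrictMonoOn (Tq ν s γ₁ γs) (Set.Ioi 0) := by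
  intro κ hκ κ' _ h
  obtain ⟨d, hd, e, -⟩ := Tq_spec ν hν s γ₁ γs κ'
  obtain ⟨-, -, -, hle⟩ := Tq_spec ν hν s γ₁ γs κ
  rw [e]
  refine (hle d hd).trans_lt ?_
  have := Real.sqrt_lt_sqrt (Hq_nonneg ν κ _) (Hq_strict ν hν κ κ' h (s • d) (hH κ hκ _))
  unfold Rq
  linarith

lemma Tq_lip (ν : Measure ℝ) [IsProbabilityMeasure ν]
    (hν : MemLp (fun z : ℝ => z) 2 ν) (s γ₁ γs κ δ : ℝ) (hδ : 0 ≤ δ) :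
    Tq ν s γ₁ γs (κ + δ) ≤ Tq ν s γ₁ γs κ + δ := by
  obtain ⟨d, hd, e, -⟩ := Tq_spec ν hν s γ₁ γs κ
  obtain ⟨-, -, -, hle⟩ := Tq_spec ν hν s γ₁ γs (κ + δ)
  rw [e]
  refine (hle d hd).trans ?_
  have := Hq_lip ν hν κ δ hδ (s • d)
  unfold Rq
  linarith

lemma Tq_cont (ν : Measure ℝ) [IsProbabilityMeasure ν]
    (hν : MemLp (fun z : ℝ => z) 2 ν) (s γ₁ γs : ℝ) : Continuous (Tq ν s γ₁ γs) := by
  have : LipschitzWith 1 (Tq ν s γ₁ γs) := by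
    refine LipschitzWith.of_le_add fun x y => ?_
    rcases le_total x y with h | h
    · exact (Tq_mono ν hν s γ₁ γs h).trans (by linarith [dist_nonneg (x := x) (y := y)])
    · have := Tq_lip ν hν s γ₁ γs y (x - y) (by linarith)
      rw [Real.dist_eq, abs_of_nonneg (by linarith)]
      simpa using this
  exact this.continuous

lemma Tq_neg (ν : Measure ℝ) [IsProbabilityMeasure ν]
    (hν : MemLp (fun z : ℝ => z) 2 ν) (s γ₁ γs : ℝ) (hγs : 0 < γs) :
    Tq ν s γ₁ γs (γs / 2) < 0 := by
  obtain ⟨-, -, -, hle⟩ := Tq_spec ν hν s γ₁ γs (γs / 2)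
  have := hle 0 K_zero
  have e : Rq ν s γ₁ γs (γs / 2) 0 = γs / 2 - γs := by
    unfold Rq
    rw [smul_zero, Hq_zero ν _ (by positivity)]
    simp
  linarith

lemma Tq_pos (ν : Measure ℝ) [IsProbabilityMeasure ν]
    (hν : MemLp (fun z : ℝ => z) 2 ν) (s γ₁ γs : ℝ) (hγ₁ : 0 < γ₁) (hγs : 0 < γs) (m : ℝ)
    (hm : 0 < m) (hH : ∀ κ : ℝ, 0 ≤ κ → ∀ c : ℝ × ℝ, κ ^ 2 * m ≤ Hq ν κ c) :
    ∃ κ, 0 < κ ∧ 0 < Tq ν s γ₁ γs κ := by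
  have hm' := Real.sqrt_pos.2 hm
  have hk : 0 < (γ₁ + γs + 1) / √m := by positivity
  refine ⟨(γ₁ + γs + 1) / √m, hk, ?_⟩
  obtain ⟨d, hd, e, -⟩ := Tq_spec ν hν s γ₁ γs ((γ₁ + γs + 1) / √m)
  rw [e]
  have h1 := Real.sqrt_le_sqrt (hH _ hk.le (s • d))
  rw [Real.sqrt_mul (sq_nonneg _), Real.sqrt_sq hk.le, div_mul_cancel₀ _ hm'.ne'] at h1
  have hd2 : d.2 ≤ 1 := by nlinarith [sq_nonneg d.1, hd.1, hd.2]
  have hs : √(1 - d.1 ^ 2 - d.2 ^ 2) ≤ 1 := by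
    apply Real.sqrt_le_one.2
    nlinarith [sq_nonneg d.1, sq_nonneg d.2]
  unfold Rq
  nlinarith

/-- Properties of the wide-limit optimization problem: unique interior minimizer characterized
by first-order stationarity, strict monotonicity of `T_∞`, its limits at `0⁺` and `+∞`
(in the extended reals), and the unique zero `κ̄^{wide}`. -/
theorem statement_18 (f₀ : ℝ → ℝ) (hf₀ : Continuous f₀) (hf01 : ∀ x, f₀ x ∈ Set.Icc (0:ℝ) 1)
    (hnd : NonDeg f₀)
    (ψ₂ γ₁ γs : ℝ) (hψ₂ : 0 < ψ₂) (hγ₁ : 0 < γ₁) (hγs : 0 < γs) :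
    (∀ κ : ℝ, 0 < κ →
      ∃ d : ℝ × ℝ, d ∈ Kwide
        ∧ (∀ d' ∈ Kwide, Rwide f₀ ψ₂ γ₁ γs κ d ≤ Rwide f₀ ψ₂ γ₁ γs κ d')
        ∧ (∀ d' ∈ Kwide, (∀ d'' ∈ Kwide,
              Rwide f₀ ψ₂ γ₁ γs κ d' ≤ Rwide f₀ ψ₂ γ₁ γs κ d'') → d' = d)
        ∧ d.1 ^ 2 + d.2 ^ 2 < 1 ∧ 0 < d.2
        ∧ fderiv ℝ (Rwide f₀ ψ₂ γ₁ γs κ) d = 0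
        ∧ (∀ d' : ℝ × ℝ, d'.1 ^ 2 + d'.2 ^ 2 < 1 → 0 < d'.2 →
            fderiv ℝ (Rwide f₀ ψ₂ γ₁ γs κ) d' = 0 → d' = d))
    ∧ StrictMonoOn (Twide f₀ ψ₂ γ₁ γs) (Set.Ioi 0)
    ∧ (∃ L : EReal,
        Tendsto (fun κ : ℝ => ((Twide f₀ ψ₂ γ₁ γs κ : ℝ) : EReal))
          (nhdsWithin 0 (Set.Ioi 0)) (nhds L) ∧ L < 0)
    ∧ (∃ L : EReal,
        Tendsto (fun κ : ℝ => ((Twide f₀ ψ₂ γ₁ γs κ : ℝ) : EReal)) atTop (nhds L) ∧ 0 < L)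
    ∧ (∃! κ : ℝ, 0 < κ ∧ Twide f₀ ψ₂ γ₁ γs κ = 0) := by
  have hP := lawT_prob f₀ hf₀ hf01
  have hν := lawT_memLp f₀ hf01
  obtain ⟨m, hm, hlow⟩ := Hq_lower (lawT f₀) hν (ind_neg f₀ hf₀ hf01 hnd) (ind_pos f₀ hf₀ hf01 hnd)
  have hH : ∀ κ, 0 < κ → ∀ c, 0 < Hq (lawT f₀) κ c := fun κ hκ c =>
    lt_of_lt_of_le (by positivity) (hlow κ hκ.le c)
  have hR : ∀ κ, Rwide f₀ ψ₂ γ₁ γs κ = Rq (lawT f₀) (√ψ₂ * γ₁) γ₁ γs κ := by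
    intro κ
    funext d
    unfold Rwide Rq
    rw [Fk_eq f₀ hf₀ hf01]
    rfl
  have hT : Twide f₀ ψ₂ γ₁ γs = Tq (lawT f₀) (√ψ₂ * γ₁) γ₁ γs := by
    funext κ
    unfold Twide Tq
    rw [hR]
  simp only [hR, hT]
  set s := √ψ₂ * γ₁
  have hmono := Tq_mono (lawT f₀) hν s γ₁ γs
  have hstrict := Tq_strict (lawT f₀) hν s γ₁ γs hH
  have hneg := Tq_neg (lawT f₀) hν s γ₁ γs hγs
  obtain ⟨k, hk, hkpos⟩ := Tq_pos (lawT f₀) hν s γ₁ γs hγ₁ hγs m hm hlow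
  have hEm : Monotone (fun κ : ℝ => ((Tq (lawT f₀) s γ₁ γs κ : ℝ) : EReal)) :=
    fun x y h => EReal.coe_le_coe_iff.2 (hmono h)
  refine ⟨fun κ hκ => Rq_partA (lawT f₀) hν s γ₁ γs κ hγ₁ hγs hκ (hH κ hκ), hstrict, ?_, ?_, ?_⟩
  · refine ⟨_, hEm.tendsto_nhdsGT 0, ?_⟩
    refine lt_of_le_of_lt (sInf_le ⟨γs / 2, by simpa using hγs, rfl⟩) ?_
    exact EReal.coe_lt_coe_iff.2 hneg
  · refine ⟨_, tendsto_atTop_iSup hEm, ?_⟩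
    refine lt_of_lt_of_le ?_ (le_iSup _ k)
    exact EReal.coe_lt_coe_iff.2 hkpos
  · have hle : γs / 2 ≤ k := by
      by_contra h
      have := hmono (not_le.1 h).le
      linarith
    obtain ⟨κ, hκ, h0⟩ := intermediate_value_Icc hle
      (Tq_cont (lawT f₀) hν s γ₁ γs).continuousOn ⟨hneg.le, hkpos.le⟩
    have hκ0 : 0 < κ := lt_of_lt_of_le (by positivity) hκ.1
    refine ⟨κ, ⟨hκ0, h0⟩, ?_⟩
    rintro κ' ⟨hκ', h0'⟩
    exact hstrict.injOn hκ' hκ0 (h0'.trans h0.symm)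

end MaxMargin
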